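/- arXiv:1303.5047 — 5 statements merged into one kernel-verified Lean document; each statement's English description precedes it below -/
import Mathlib

section
/- Assume B is bounded below on the closure of R(D). Then DB|_{closure(R(D))} and BD|_{closure(R(BD))} are similar under conjugation by B: for every v ∈ closure(R(D)) with Bv ∈ D(D), one has Bv ∈ closure(R(BD)), v ∈ D(DB), (DB)v ∈ closure(R(D)), and (BD)(Bv) = B((DB)v); conversely, every u ∈ closure(R(BD)) ∩ D(D) can be written uniquely as u = Bv with v ∈ closure(R(D)), and this v satisfies Bv ∈ D(D). -/
noncomputable section

variable {X : Type*} [NormedAddCommGroup X] [NormedSpace ℂ X]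

/-- A complex normed space is reflexive if the canonical inclusion into its double dual is
surjective. -/
def ReflexiveSpace (X : Type*) [NormedAddCommGroup X] [NormedSpace ℂ X] : Prop :=
  Function.Surjective (NormedSpace.inclusionInDoubleDual ℂ X)

/-- The open bisector `S_ω = {z ≠ 0 : |arg z| < ω or |arg (-z)| < ω}`. -/
def Sector (ω : ℝ) : Set ℂ :=
  {z | z ≠ 0 ∧ (|Complex.arg z| < ω ∨ |Complex.arg (-z)| < ω)}

/-- The kernel of a partially defined operator, viewed as a subspace of the ambient space. -/
def pker (A : X →ₗ.[ℂ] X) : Submodule ℂ X :=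
  (LinearMap.ker A.toFun).map A.domain.subtype

/-- The range of a partially defined operator. -/
def pran (A : X →ₗ.[ℂ] X) : Submodule ℂ X :=
  LinearMap.range A.toFun

/-- `X = N ⊕ M` as a topological direct sum: `N` and `M` are closed complementary subspaces. -/
def IsTopDirectSum (N M : Submodule ℂ X) : Prop :=
  IsClosed (N : Set X) ∧ IsClosed (M : Set X) ∧ N ⊓ M = ⊥ ∧ N ⊔ M = ⊤

/-- `A` kernel/range decomposes: `X = N(A) ⊕ closure (R(A))` as a topological direct sum. -/
def KerRanDecomp (A : X →ₗ.[ℂ] X) : Prop :=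
  IsTopDirectSum (pker A) (pran A).topologicalClosure

/-- A closed operator `A` is bisectorial of angle `ω` if for every `ω' ∈ (ω, π/2)` there is
`C > 0` such that for every `λ ∉ S_{ω'}` the map `I + λA : D(A) → X` is a bijection whose
inverse is bounded with norm at most `C`. -/
def IsBisectorial (A : X →ₗ.[ℂ] X) (ω : ℝ) : Prop :=
  A.IsClosed ∧
    ∀ ω' ∈ Set.Ioo ω (Real.pi / 2), ∃ C > 0, ∀ lam : ℂ, lam ∉ Sector ω' →
      Function.Bijective (fun u : A.domain => (u : X) + lam • A u) ∧
        ∀ u : A.domain, ‖(u : X)‖ ≤ C * ‖(u : X) + lam • A u‖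

/-- The operator `BD`, with domain `D(D)`, acting by `u ↦ B (D u)`. -/
def opBD (B : X →L[ℂ] X) (D : X →ₗ.[ℂ] X) : X →ₗ.[ℂ] X :=
  ⟨D.domain, (B : X →ₗ[ℂ] X).comp D.toFun⟩

/-- The operator `DB`, with domain `{u : B u ∈ D(D)}`, acting by `u ↦ D (B u)`. -/
def opDB (B : X →L[ℂ] X) (D : X →ₗ.[ℂ] X) : X →ₗ.[ℂ] X :=
  ⟨D.domain.comap (B : X →ₗ[ℂ] X),
    D.toFun.comp ((B : X →ₗ[ℂ] X).restrict fun _ hx => hx)⟩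

/-- `B` is bounded below on the set `S`. -/
def BoundedBelowOn (B : X →L[ℂ] X) (S : Set X) : Prop :=
  ∃ c > 0, ∀ u ∈ S, c * ‖u‖ ≤ ‖B u‖

/-!
The heart of the matter is `closure (R(BD)) = B (closure (R(D)))`. The inclusion `⊇` is continuity
of `B`; for `⊆`, the lower bound makes `B` carry the complete subspace `closure (R(D))` onto a
closed subspace, which contains `R(BD) = B (R(D))`. The lower bound also makes `B` injective on
`closure (R(D))`, and the intertwining relation `(BD)B = B(DB)` is associativity.
-/

namespace BoundedBelowOn

variable {B : X →L[ℂ] X} {S : Submodule ℂ X}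

theorem exists_antilipschitzWith_comp_subtypeL (hB : BoundedBelowOn B S) :
    ∃ K, AntilipschitzWith K (B ∘L S.subtypeL) := by
  obtain ⟨c, hc, hbound⟩ := hB
  exact antilipschitzWith_iff_exists_mul_le_norm.2 ⟨c, hc, fun v => hbound v v.2⟩

theorem injOn (hB : BoundedBelowOn B S) : Set.InjOn B S := by
  obtain ⟨K, hK⟩ := hB.exists_antilipschitzWith_comp_subtypeL
  exact Set.injOn_iff_injective.2 hK.injective

theorem isClosed_image [CompleteSpace S] (hB : BoundedBelowOn B S) :
    IsClosed (B '' (S : Set X)) := by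
  obtain ⟨K, hK⟩ := hB.exists_antilipschitzWith_comp_subtypeL
  rw [Set.image_eq_range]
  exact hK.isClosed_range (B ∘L S.subtypeL).uniformContinuous

theorem map_topologicalClosure [CompleteSpace S.topologicalClosure]
    (hB : BoundedBelowOn B S.topologicalClosure) :
    S.topologicalClosure.map (B : X →ₗ[ℂ] X) =
      (S.map (B : X →ₗ[ℂ] X)).topologicalClosure :=
  le_antisymm (S.topologicalClosure_map B) <|
    Submodule.topologicalClosure_minimal _ (Submodule.map_mono S.le_topologicalClosure)
      hB.isClosed_image

end BoundedBelowOn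

theorem apply_mem_pran (A : X →ₗ.[ℂ] X) (x : A.domain) : A x ∈ pran A :=
  LinearMap.mem_range_self A.toFun x

theorem pran_opBD (B : X →L[ℂ] X) (D : X →ₗ.[ℂ] X) :
    pran (opBD B D) = (pran D).map (B : X →ₗ[ℂ] X) :=
  LinearMap.range_comp D.toFun (B : X →ₗ[ℂ] X)

theorem opBD_apply_map (B : X →L[ℂ] X) (D : X →ₗ.[ℂ] X) (v : (opDB B D).domain) :
    opBD B D ⟨B v, v.2⟩ = B (opDB B D v) :=
  rfl

theorem topologicalClosure_pran_opBD {B : X →L[ℂ] X} {D : X →ₗ.[ℂ] X}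
    [CompleteSpace (pran D).topologicalClosure]
    (hlow : BoundedBelowOn B (pran D).topologicalClosure) :
    (pran (opBD B D)).topologicalClosure =
      (pran D).topologicalClosure.map (B : X →ₗ[ℂ] X) := by
  rw [pran_opBD, hlow.map_topologicalClosure]

theorem stmt_4_general {X : Type*} [NormedAddCommGroup X] [NormedSpace ℂ X]
    (D : X →ₗ.[ℂ] X) [CompleteSpace (pran D).topologicalClosure] (B : X →L[ℂ] X)
    (hlow : BoundedBelowOn B ((pran D).topologicalClosure : Set X)) :
    (∀ v ∈ ((pran D).topologicalClosure : Set X), ∀ h : B v ∈ D.domain,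
      B v ∈ ((pran (opBD B D)).topologicalClosure : Set X) ∧
      v ∈ (opDB B D).domain ∧
      (D ⟨B v, h⟩ : X) ∈ ((pran D).topologicalClosure : Set X) ∧
      ∀ hv : v ∈ (opDB B D).domain, ∀ h' : B v ∈ (opBD B D).domain,
        opBD B D ⟨B v, h'⟩ = B (opDB B D ⟨v, hv⟩)) ∧
    ∀ u ∈ ((pran (opBD B D)).topologicalClosure : Set X), u ∈ D.domain →
      ∃! v, v ∈ ((pran D).topologicalClosure : Set X) ∧ B v = u ∧ B v ∈ D.domain := by
  rw [topologicalClosure_pran_opBD hlow]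
  constructor
  · intro v hv h
    have hDBv : D ⟨B v, h⟩ ∈ (pran D).topologicalClosure :=
      (pran D).le_topologicalClosure (apply_mem_pran D _)
    exact ⟨Submodule.mem_map_of_mem hv, h, hDBv, fun hv' _ => opBD_apply_map B D ⟨v, hv'⟩⟩
  · rintro _ ⟨v, hv, rfl⟩ hBv
    exact ⟨v, ⟨hv, rfl, hBv⟩, fun w ⟨hw, hBw, _⟩ => hlow.injOn hw hv hBw⟩

/-- If `B` is bounded below on the closure of `R(D)`, then
`DB` restricted to `closure (R(D))` and `BD` restricted to `closure (R(BD))` are similar under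
conjugation by `B`: for `v ∈ closure (R(D))` with `B v ∈ D(D)` one has
`B v ∈ closure (R(BD))`, `v ∈ D(DB)`, `(DB) v ∈ closure (R(D))` and `(BD)(B v) = B ((DB) v)`;
conversely every `u ∈ closure (R(BD)) ∩ D(D)` is uniquely `u = B v` with `v ∈ closure (R(D))`,
and this `v` satisfies `B v ∈ D(D)`. -/
theorem stmt_4 {X : Type*} [NormedAddCommGroup X] [NormedSpace ℂ X] [CompleteSpace X]
    (hrefl : ReflexiveSpace X) (D : X →ₗ.[ℂ] X) (hD : D.IsClosed)
    (hdense : Dense (D.domain : Set X)) (B : X →L[ℂ] X)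
    (hlow : BoundedBelowOn B ((pran D).topologicalClosure : Set X)) :
    (∀ v ∈ ((pran D).topologicalClosure : Set X), ∀ h : B v ∈ D.domain,
      B v ∈ ((pran (opBD B D)).topologicalClosure : Set X) ∧
      v ∈ (opDB B D).domain ∧
      (D ⟨B v, h⟩ : X) ∈ ((pran D).topologicalClosure : Set X) ∧
      ∀ hv : v ∈ (opDB B D).domain, ∀ h' : B v ∈ (opBD B D).domain,
        opBD B D ⟨B v, h'⟩ = B (opDB B D ⟨v, hv⟩)) ∧
    ∀ u ∈ ((pran (opBD B D)).topologicalClosure : Set X), u ∈ D.domain →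
      ∃! v, v ∈ ((pran D).topologicalClosure : Set X) ∧ B v = u ∧ B v ∈ D.domain := by
  exact stmt_4_general D B hlow
end
end

section
/- Assume B is bounded below on the closure of R(D) and that H = N(D) ⊕ closure(R(BD)) as a topological direct sum. Then (DB)* = B*D*: the adjoint of the operator DB (with domain {u ∈ H : Bu ∈ D(D)}) has domain D(D*) and (DB)*u = B*(D*u) for all u ∈ D(D*). -/
noncomputable section

variable {X : Type*} [NormedAddCommGroup X] [NormedSpace ℂ X]

/-!
Suppose `D` is densely defined, `N(D)` is closed and `N(D) + R(B) = H`. The bounded operator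
`(n, x) ↦ n + B x` from `N(D) × H` to `H` is then onto, hence open. Openness makes `D(DB)` dense,
and it gives every `v` a decomposition `v = n + B x` with `n ∈ N(D)` and `‖x‖ ≤ C ‖v‖`. For
`v ∈ D(D)` this yields `D v = D B x`, so `⟪y, D v⟫ = ⟪(DB)* y, x⟫` is bounded by a multiple of `‖v‖`
for all `y ∈ D((DB)*)`; that is, `D((DB)*) ⊆ D(D*)`. The relation `B*D* ⊆ (DB)*` is formal.
If `B` is bounded below on the closure of `R(D)`, the image of that closure is closed, so `R(B)`
contains the closure of `R(BD)`.
-/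

section PartialMaps

variable {R E F G : Type*} [Ring R] [AddCommGroup E] [Module R E] [AddCommGroup F] [Module R F]
  [AddCommGroup G] [Module R G]

/-- The kernel of a partially defined linear map, as a submodule of the ambient space; it is `pker`
without the restriction to complex normed spaces and to operators from a space to itself. -/
def pmapKer (D : F →ₗ.[R] G) : Submodule R F :=
  (LinearMap.ker D.toFun).map D.domain.subtype

/-- The composition `x ↦ D (B x)` of a partially defined linear map with an everywhere defined one,
on its maximal domain `{x | B x ∈ D.domain}`; it is `opDB` for arbitrary modules. -/
def pmapComp (D : F →ₗ.[R] G) (B : E →ₗ[R] F) : E →ₗ.[R] G :=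
  ⟨D.domain.comap B, D.toFun.comp (B.restrict fun _ hx => hx)⟩

variable {D : F →ₗ.[R] G}

lemma mem_pmapKer {x : F} : x ∈ pmapKer D ↔ ∃ h : x ∈ D.domain, D ⟨x, h⟩ = 0 := by
  simp [pmapKer]

lemma pmapKer_le_domain : pmapKer D ≤ D.domain :=
  fun _ hx => (mem_pmapKer.1 hx).1

lemma apply_eq_of_sub_mem_pmapKer {v w : D.domain} (h : (v - w : F) ∈ pmapKer D) : D v = D w := by
  obtain ⟨_, hzero⟩ := mem_pmapKer.1 h
  exact sub_eq_zero.1 ((D.map_sub v w).symm.trans hzero)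

end PartialMaps

section NormedSpaces

variable {𝕜 E F : Type*} [NontriviallyNormedField 𝕜] [NormedAddCommGroup E] [NormedSpace 𝕜 E]
  [NormedAddCommGroup F] [NormedSpace 𝕜 F] {B : E →L[𝕜] F} {N p : Submodule 𝕜 F}

lemma coprod_subtypeL_surjective (hsum : N ⊔ B.range = ⊤) :
    Function.Surjective (N.subtypeL.coprod B) := by
  intro v
  have hv : v ∈ N ⊔ B.range := hsum ▸ Submodule.mem_top
  obtain ⟨n, hn, _, ⟨x, rfl⟩, rfl⟩ := Submodule.mem_sup.1 hv
  exact ⟨(⟨n, hn⟩, x), rfl⟩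

lemma isClosed_map_of_forall_mul_norm_le {q : Submodule 𝕜 E} [CompleteSpace q] {c : ℝ} (hc : 0 < c)
    (hB : ∀ u ∈ q, c * ‖u‖ ≤ ‖B u‖) : IsClosed (q.map (B : E →ₗ[𝕜] F) : Set F) := by
  have hanti : AntilipschitzWith (Real.toNNReal c⁻¹) (B.comp q.subtypeL) := by
    refine ContinuousLinearMap.antilipschitz_of_bound _ fun u => ?_
    rw [Real.coe_toNNReal _ (by positivity), le_inv_mul_iff₀ hc]
    exact hB u u.2
  have hrange : Set.range (B.comp q.subtypeL) = q.map (B : E →ₗ[𝕜] F) := by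
    ext; simp
  exact hrange ▸ hanti.isClosed_range (B.comp q.subtypeL).uniformContinuous

variable [CompleteSpace E] [CompleteSpace F]

lemma exists_sub_mem_and_norm_le (hN : IsClosed (N : Set F)) (hsum : N ⊔ B.range = ⊤) :
    ∃ C, ∀ v, ∃ x, v - B x ∈ N ∧ ‖x‖ ≤ C * ‖v‖ := by
  have := hN.completeSpace_coe
  obtain ⟨C, -, hC⟩ :=
    (N.subtypeL.coprod B).exists_preimage_norm_le (coprod_subtypeL_surjective hsum)
  refine ⟨C, fun v => ?_⟩
  obtain ⟨⟨n, x⟩, rfl, hnx⟩ := hC v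
  exact ⟨x, by simp, (norm_snd_le (n, x)).trans hnx⟩

lemma dense_comap_of_le (hN : IsClosed (N : Set F)) (hsum : N ⊔ B.range = ⊤) (hNp : N ≤ p)
    (hp : Dense (p : Set F)) : Dense (p.comap (B : E →ₗ[𝕜] F) : Set E) := by
  have := hN.completeSpace_coe
  have hpre : Dense (N.subtypeL.coprod B ⁻¹' p) :=
    hp.preimage ((N.subtypeL.coprod B).isOpenMap (coprod_subtypeL_surjective hsum))
  refine (Prod.snd_surjective.denseRange.dense_image continuous_snd hpre).mono ?_
  rintro _ ⟨⟨n, x⟩, hnx, rfl⟩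
  exact (p.add_mem_iff_right (hNp n.2)).1 hnx

variable {G : Type*} [AddCommGroup G] [Module 𝕜 G] {D : F →ₗ.[𝕜] G}

lemma dense_domain_pmapComp (hdense : Dense (D.domain : Set F))
    (hker : IsClosed (pmapKer D : Set F)) (hsum : pmapKer D ⊔ B.range = ⊤) :
    Dense ((pmapComp D B.toLinearMap).domain : Set E) :=
  dense_comap_of_le hker hsum pmapKer_le_domain hdense

lemma exists_pmapComp_eq_and_norm_le (hker : IsClosed (pmapKer D : Set F))
    (hsum : pmapKer D ⊔ B.range = ⊤) :
    ∃ C, ∀ v : D.domain, ∃ x : (pmapComp D B.toLinearMap).domain,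
      pmapComp D B.toLinearMap x = D v ∧ ‖(x : E)‖ ≤ C * ‖(v : F)‖ := by
  obtain ⟨C, hC⟩ := exists_sub_mem_and_norm_le hker hsum
  refine ⟨C, fun v => ?_⟩
  obtain ⟨x, hvx, hx⟩ := hC v
  have hBx : B x ∈ D.domain := (D.domain.sub_mem_iff_right v.2).1 (pmapKer_le_domain hvx)
  exact ⟨⟨x, hBx⟩, (apply_eq_of_sub_mem_pmapKer (w := ⟨B x, hBx⟩) hvx).symm, hx⟩

end NormedSpaces

section InnerProductSpaces

variable {𝕜 E F G : Type*} [RCLike 𝕜] [NormedAddCommGroup E] [InnerProductSpace 𝕜 E]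
  [CompleteSpace E] [NormedAddCommGroup F] [InnerProductSpace 𝕜 F] [CompleteSpace F]
  [NormedAddCommGroup G] [InnerProductSpace 𝕜 G] {D : F →ₗ.[𝕜] G} {B : E →L[𝕜] F}

lemma isFormalAdjoint_compPMap_adjoint_pmapComp (hdense : Dense (D.domain : Set F)) :
    (B.adjoint.toLinearMap.compPMap D.adjoint).IsFormalAdjoint (pmapComp D B.toLinearMap) := by
  intro y x
  calc inner 𝕜 (B.adjoint (D.adjoint y)) (x : E) = inner 𝕜 (D.adjoint y) (B x) :=
        B.adjoint_inner_left x (D.adjoint y)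
    _ = inner 𝕜 (y : G) (D ⟨B x, x.2⟩) :=
        LinearPMap.adjoint_isFormalAdjoint hdense y ⟨B x, x.2⟩

lemma adjoint_domain_pmapComp_le (hdense : Dense (D.domain : Set F))
    (hker : IsClosed (pmapKer D : Set F)) (hsum : pmapKer D ⊔ B.range = ⊤) :
    (pmapComp D B.toLinearMap).adjoint.domain ≤ D.adjoint.domain := by
  intro y hy
  obtain ⟨C, hC⟩ := exists_pmapComp_eq_and_norm_le hker hsum
  have hdense' : Dense ((pmapComp D B.toLinearMap).domain : Set E) :=
    dense_domain_pmapComp hdense hker hsum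
  obtain ⟨w, hw⟩ : ∃ w : E, ∀ x : (pmapComp D B.toLinearMap).domain,
      inner 𝕜 w (x : E) = inner 𝕜 y (pmapComp D B.toLinearMap x) :=
    ⟨_, LinearPMap.adjoint_isFormalAdjoint hdense' ⟨y, hy⟩⟩
  have hbound (v : D.domain) : ‖inner 𝕜 y (D v)‖ ≤ ‖w‖ * C * ‖v‖ := by
    obtain ⟨x, hxv, hx⟩ := hC v
    calc ‖inner 𝕜 y (D v)‖ = ‖inner 𝕜 w (x : E)‖ := by rw [hw, hxv]
      _ ≤ ‖w‖ * ‖(x : E)‖ := norm_inner_le_norm w (x : E)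
      _ ≤ ‖w‖ * (C * ‖v‖) := mul_le_mul_of_nonneg_left hx (norm_nonneg w)
      _ = ‖w‖ * C * ‖v‖ := (mul_assoc _ _ _).symm
  exact (D.mem_adjoint_domain_iff y).2 (AddMonoidHomClass.continuous_of_bound _ _ hbound)

theorem stmt_10_general (hdense : Dense (D.domain : Set F))
    (hker : IsClosed (pmapKer D : Set F)) (hsum : pmapKer D ⊔ B.range = ⊤) :
    (pmapComp D B.toLinearMap).adjoint = B.adjoint.toLinearMap.compPMap D.adjoint := by
  have hle : B.adjoint.toLinearMap.compPMap D.adjoint ≤ (pmapComp D B.toLinearMap).adjoint :=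
    (isFormalAdjoint_compPMap_adjoint_pmapComp hdense).symm.le_adjoint
      (dense_domain_pmapComp hdense hker hsum)
  exact (LinearPMap.eq_of_le_of_domain_eq hle
    (hle.1.antisymm (adjoint_domain_pmapComp_le hdense hker hsum))).symm

end InnerProductSpaces

lemma topologicalClosure_pran_opBD_le_range [CompleteSpace X] {D : X →ₗ.[ℂ] X} {B : X →L[ℂ] X}
    (hlow : BoundedBelowOn B ((pran D).topologicalClosure : Set X)) :
    (pran (opBD B D)).topologicalClosure ≤ B.range := by
  obtain ⟨c, hc, hB⟩ := hlow
  have hran : pran (opBD B D) ≤ (pran D).topologicalClosure.map (B : X →ₗ[ℂ] X) :=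
    (LinearMap.range_comp _ _).trans_le (Submodule.map_mono (pran D).le_topologicalClosure)
  exact ((pran (opBD B D)).topologicalClosure_minimal hran
    (isClosed_map_of_forall_mul_norm_le hc hB)).trans LinearMap.map_le_range

lemma pker_sup_range_eq_top [CompleteSpace X] {D : X →ₗ.[ℂ] X} {B : X →L[ℂ] X}
    (hlow : BoundedBelowOn B ((pran D).topologicalClosure : Set X))
    (hsup : pker D ⊔ (pran (opBD B D)).topologicalClosure = ⊤) : pker D ⊔ B.range = ⊤ :=
  top_unique (hsup.ge.trans (sup_le_sup_left (topologicalClosure_pran_opBD_le_range hlow) _))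

/-- (Hilbert space.) If `B` is bounded below on the closure of `R(D)` and
`H = N(D) ⊕ closure (R(BD))` as a topological direct sum, then `(DB)* = B*D*`: the adjoint of
`DB` has domain `D(D*)` and acts by `u ↦ B* (D* u)`. -/
theorem stmt_10 {H : Type*} [NormedAddCommGroup H] [InnerProductSpace ℂ H] [CompleteSpace H]
    (D : H →ₗ.[ℂ] H) (hD : D.IsClosed) (hdense : Dense (D.domain : Set H)) (B : H →L[ℂ] H)
    (hlow : BoundedBelowOn B ((pran D).topologicalClosure : Set H))
    (hsplit : IsTopDirectSum (pker D) (pran (opBD B D)).topologicalClosure) :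
    (opDB B D).adjoint.domain = D.adjoint.domain ∧
    ∀ (u : H) (hu : u ∈ (opDB B D).adjoint.domain) (hu' : u ∈ D.adjoint.domain),
      (opDB B D).adjoint ⟨u, hu⟩ = ContinuousLinearMap.adjoint B (D.adjoint ⟨u, hu'⟩) := by
  have hadj : (opDB B D).adjoint = B.adjoint.toLinearMap.compPMap D.adjoint :=
    stmt_10_general hdense hsplit.1 (pker_sup_range_eq_top hlow hsplit.2.2.2)
  obtain ⟨hdomain, happly⟩ := LinearPMap.ext_iff.1 hadj
  exact ⟨hdomain, fun _ hu hu' => happly (hf := hu) (hg := hu')⟩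
end
end

section
/- Assume B is bounded below on the closure of R(D) and that H = N(D) ⊕ closure(R(BD)) as a topological direct sum. Then the dual of closure(R(BD)) is identified with closure(R(D*)) via the inner product: for every continuous linear functional ℓ on the subspace closure(R(BD)) there exists w ∈ closure(R(D*)) such that ℓ(u) = ⟨w, u⟩ for all u ∈ closure(R(BD)), and the norms ‖ℓ‖ and ‖w‖ are comparable (with constants independent of ℓ); conversely each w ∈ closure(R(D*)) defines such a functional. -/
noncomputable section

variable {X : Type*} [NormedAddCommGroup X] [NormedSpace ℂ X]

/-!
Since `D` is closed and densely defined, taking the adjoint of its graph twice gives the graph back,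
so `N(D) = R(D*)ᗮ` and the closure of `R(D*)` is `N(D)ᗮ`. If `M` is a topological complement of
`N(D)` and `P` is the projection onto `M` along `N(D)`, a functional `ℓ` on `M` extends to `ℓ ∘ P`,
which vanishes on `N(D)`; its Riesz representative is therefore in `N(D)ᗮ` and represents `ℓ` on
`M`.
-/

theorem IsTopDirectSum.isTopCompl [CompleteSpace X] {N M : Submodule ℂ X}
    (h : IsTopDirectSum N M) : Submodule.IsTopCompl N M :=
  have ⟨isClosed_N, isClosed_M, inf_eq_bot, sup_eq_top⟩ := h
  Submodule.IsCompl.isTopCompl_of_isClosed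
    ⟨disjoint_iff.2 inf_eq_bot, codisjoint_iff.2 sup_eq_top⟩ isClosed_N isClosed_M

section Adjoint

variable {𝕜 E F : Type*} [RCLike 𝕜] [NormedAddCommGroup E] [InnerProductSpace 𝕜 E]
  [NormedAddCommGroup F] [InnerProductSpace 𝕜 F]

theorem mem_adjoint_of_toLp_mem_orthogonal {g : Submodule 𝕜 (E × F)} {a : E} {b : F}
    (h : WithLp.toLp 2 (a, b) ∈ (g.comap (WithLp.linearEquiv 2 𝕜 (E × F)).toLinearMap)ᗮ) :
    (-b, a) ∈ g.adjoint := by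
  rw [Submodule.mem_adjoint_iff]
  intro x y hxy
  have inner_eq_zero : inner 𝕜 x a + inner 𝕜 y b = 0 := by
    simpa only [WithLp.prod_inner_apply] using
      (Submodule.mem_orthogonal _ _).1 h (WithLp.toLp 2 (x, y)) hxy
  rw [inner_neg_right]
  linear_combination -inner_eq_zero

theorem adjoint_adjoint_le_of_isClosed [CompleteSpace E] [CompleteSpace F]
    {g : Submodule 𝕜 (E × F)} (hg : IsClosed (g : Set (E × F))) : g.adjoint.adjoint ≤ g := by
  rintro ⟨x, y⟩ hxy
  let K := g.comap (WithLp.linearEquiv 2 𝕜 (E × F)).toLinearMap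
  have isClosed_K : IsClosed (K : Set (WithLp 2 (E × F))) :=
    hg.preimage (WithLp.prod_continuous_ofLp 2 E F)
  have : CompleteSpace K := isClosed_K.completeSpace_coe
  suffices WithLp.toLp 2 (x, y) ∈ Kᗮᗮ by rwa [Submodule.orthogonal_orthogonal] at this
  rw [Submodule.mem_orthogonal]
  rintro ⟨a, b⟩ hab
  simpa [WithLp.prod_inner_apply, add_comm] using
    (Submodule.mem_adjoint_iff _ _).1 hxy _ _ (mem_adjoint_of_toLp_mem_orthogonal hab)

theorem mk_zero_mem_graph_iff {D : E →ₗ.[𝕜] F} {x : E} :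
    (x, 0) ∈ D.graph ↔ x ∈ D.toFun.ker.map D.domain.subtype := by
  simp only [LinearPMap.mem_graph_iff, Submodule.mem_map, LinearMap.mem_ker,
    Submodule.subtype_apply, LinearPMap.toFun_eq_coe, and_comm]

theorem mk_zero_mem_adjoint_graph_iff {S : F →ₗ.[𝕜] E} {x : E} :
    (x, 0) ∈ S.graph.adjoint ↔ x ∈ S.toFun.rangeᗮ := by
  rw [Submodule.mem_adjoint_iff, Submodule.mem_orthogonal]
  constructor
  · rintro h _ ⟨y, rfl⟩
    simpa using h y (S y) (S.mem_graph y)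
  · intro h a b hab
    obtain ⟨y, rfl, rfl⟩ := (LinearPMap.mem_graph_iff S).1 hab
    simpa using h (S y) ⟨y, rfl⟩

variable [CompleteSpace E] {D : E →ₗ.[𝕜] F}

theorem ker_le_orthogonal_range_adjoint (hdense : Dense (D.domain : Set E)) :
    D.toFun.ker.map D.domain.subtype ≤ D.adjoint.toFun.rangeᗮ := by
  rintro _ ⟨x, hx, rfl⟩
  rw [Submodule.mem_orthogonal]
  rintro _ ⟨y, rfl⟩
  calc inner 𝕜 (D.adjoint y) (x : E) = inner 𝕜 (y : F) (D x) :=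
        LinearPMap.adjoint_isFormalAdjoint hdense y x
    _ = inner 𝕜 (y : F) 0 := congrArg _ hx
    _ = 0 := inner_zero_right _

theorem orthogonal_range_adjoint [CompleteSpace F] (hD : D.IsClosed)
    (hdense : Dense (D.domain : Set E)) :
    D.adjoint.toFun.rangeᗮ = D.toFun.ker.map D.domain.subtype := by
  refine le_antisymm (fun x hx => ?_) (ker_le_orthogonal_range_adjoint hdense)
  rw [← mk_zero_mem_adjoint_graph_iff, LinearPMap.adjoint_graph_eq_graph_adjoint hdense] at hx
  exact mk_zero_mem_graph_iff.1 (adjoint_adjoint_le_of_isClosed hD hx)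

theorem topologicalClosure_range_adjoint [CompleteSpace F] (hD : D.IsClosed)
    (hdense : Dense (D.domain : Set E)) :
    D.adjoint.toFun.range.topologicalClosure = (D.toFun.ker.map D.domain.subtype)ᗮ := by
  rw [← Submodule.orthogonal_orthogonal_eq_closure, orthogonal_range_adjoint hD hdense]

end Adjoint

section Riesz

variable {𝕜 E : Type*} [RCLike 𝕜] [NormedAddCommGroup E] [InnerProductSpace 𝕜 E]
  {M N : Submodule 𝕜 E}

theorem norm_le_norm_of_forall_eq_inner {ℓ : M →L[𝕜] 𝕜} {w : E}
    (h : ∀ u : M, ℓ u = inner 𝕜 w (u : E)) : ‖ℓ‖ ≤ ‖w‖ :=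
  ℓ.opNorm_le_bound (norm_nonneg w) fun u => h u ▸ norm_inner_le_norm w (u : E)

theorem exists_mem_orthogonal_forall_eq_inner [CompleteSpace E] (hMN : Submodule.IsTopCompl M N)
    (ℓ : M →L[𝕜] 𝕜) :
    ∃ w ∈ Nᗮ, (∀ u : M, ℓ u = inner 𝕜 w (u : E)) ∧ ‖w‖ ≤ ‖ℓ‖ * ‖M.projectionOntoL N hMN‖ := by
  let P := M.projectionOntoL N hMN
  let w := (InnerProductSpace.toDual 𝕜 E).symm (ℓ.comp P)
  have inner_w (u : E) : inner 𝕜 w u = ℓ (P u) := InnerProductSpace.toDual_symm_apply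
  refine ⟨w, ?_, fun u => ?_, ?_⟩
  · rw [Submodule.mem_orthogonal']
    intro v hv
    rw [inner_w, (Submodule.projectionOntoL_apply_eq_zero_iff hMN).2 hv, map_zero]
  · rw [inner_w, Submodule.projectionOntoL_apply_left]
  · calc ‖w‖ = ‖ℓ.comp P‖ := LinearIsometryEquiv.norm_map _ _
      _ ≤ ‖ℓ‖ * ‖P‖ := ℓ.opNorm_comp_le P

end Riesz

theorem stmt_11_general {𝕜 E F : Type*} [RCLike 𝕜] [NormedAddCommGroup E]
    [InnerProductSpace 𝕜 E] [CompleteSpace E] [NormedAddCommGroup F] [InnerProductSpace 𝕜 F]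
    [CompleteSpace F] (D : E →ₗ.[𝕜] F) (hD : D.IsClosed) (hdense : Dense (D.domain : Set E))
    (M : Submodule 𝕜 E) (hM : Submodule.IsTopCompl (D.toFun.ker.map D.domain.subtype) M) :
    (∃ C₁ > (0 : ℝ), ∃ C₂ > (0 : ℝ), ∀ ℓ : M →L[𝕜] 𝕜,
      ∃ w ∈ D.adjoint.toFun.range.topologicalClosure,
        (∀ u : M, ℓ u = inner 𝕜 w (u : E)) ∧ C₁ * ‖w‖ ≤ ‖ℓ‖ ∧ ‖ℓ‖ ≤ C₂ * ‖w‖) ∧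
    ∀ w ∈ D.adjoint.toFun.range.topologicalClosure,
      ∃ ℓ : M →L[𝕜] 𝕜, ∀ u : M, ℓ u = inner 𝕜 w (u : E) := by
  refine ⟨?_, fun w _ => ⟨(innerSL 𝕜 w).comp M.subtypeL, fun _ => rfl⟩⟩
  let P := M.projectionOntoL _ hM.symm
  -- `‖P‖ = 0` when `M = ⊥`, so the constant is not `‖P‖⁻¹`.
  refine ⟨(‖P‖ + 1)⁻¹, by positivity, 1, one_pos, fun ℓ => ?_⟩
  obtain ⟨w, w_mem, eq_inner, norm_w_le⟩ := exists_mem_orthogonal_forall_eq_inner hM.symm ℓ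
  rw [topologicalClosure_range_adjoint hD hdense]
  refine ⟨w, w_mem, eq_inner, ?_, ?_⟩
  · rw [inv_mul_le_iff₀ (by positivity)]
    calc ‖w‖ ≤ ‖ℓ‖ * ‖P‖ := norm_w_le
      _ = ‖P‖ * ‖ℓ‖ := mul_comm _ _
      _ ≤ (‖P‖ + 1) * ‖ℓ‖ := by gcongr; exact le_add_of_nonneg_right zero_le_one
  · rw [one_mul]
    exact norm_le_norm_of_forall_eq_inner eq_inner

/-- (Hilbert space.) If `B` is bounded below on the closure of `R(D)` and
`H = N(D) ⊕ closure (R(BD))` as a topological direct sum, then the dual of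
`closure (R(BD))` is identified with `closure (R(D*))` via the inner product: every continuous
linear functional `ℓ` on `closure (R(BD))` is of the form `u ↦ ⟪w, u⟫` for some
`w ∈ closure (R(D*))` with `‖ℓ‖` and `‖w‖` comparable (constants independent of `ℓ`), and
conversely every such `w` defines such a functional. -/
theorem stmt_11 {H : Type*} [NormedAddCommGroup H] [InnerProductSpace ℂ H] [CompleteSpace H]
    (D : H →ₗ.[ℂ] H) (hD : D.IsClosed) (hdense : Dense (D.domain : Set H)) (B : H →L[ℂ] H)
    (hlow : BoundedBelowOn B ((pran D).topologicalClosure : Set H))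
    (hsplit : IsTopDirectSum (pker D) (pran (opBD B D)).topologicalClosure) :
    (∃ C₁ > (0 : ℝ), ∃ C₂ > (0 : ℝ),
      ∀ ℓ : ↥((pran (opBD B D)).topologicalClosure) →L[ℂ] ℂ,
        ∃ w ∈ ((pran D.adjoint).topologicalClosure : Set H),
          (∀ u : ↥((pran (opBD B D)).topologicalClosure), ℓ u = @inner ℂ H _ w (u : H)) ∧
          C₁ * ‖w‖ ≤ ‖ℓ‖ ∧ ‖ℓ‖ ≤ C₂ * ‖w‖) ∧
    ∀ w ∈ ((pran D.adjoint).topologicalClosure : Set H),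
      ∃ ℓ : ↥((pran (opBD B D)).topologicalClosure) →L[ℂ] ℂ,
        ∀ u : ↥((pran (opBD B D)).topologicalClosure), ℓ u = @inner ℂ H _ w (u : H) :=
  stmt_11_general D hD hdense _ hsplit.isTopCompl
end
end

section
/- Assume B is bounded below on the closure of R(D) and that D kernel/range decomposes. If BD is bisectorial of angle ω, then DB is bisectorial of angle ω. -/
noncomputable section

variable {X : Type*} [NormedAddCommGroup X] [NormedSpace ℂ X]

/-!
The maps `I + λBD` and `I + λDB` are intertwined by `B`, namely `B (I + λDB) = (I + λBD) B`, and
their inverses are related by `(I + λDB)⁻¹ = I - λD (I + λBD)⁻¹ B`. So bijectivity passes from `BD`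
to `DB` by pure algebra. For the norm bound, put `f = (I + λDB) u`. Then `λBDBu = B f - Bu` is
controlled by `‖B f‖` through the bound for `BD`, and the lower bound of `B` on `R(D)` turns this
into control of `λDBu = f - u`.
-/

/-- The operator `I + λA : D(A) → X`, whose inverse is the resolvent that appears in the definition
of bisectoriality. Its source is the domain of `A`, so it is a total linear map. -/
def oneAddSMul (A : X →ₗ.[ℂ] X) (lam : ℂ) : A.domain →ₗ[ℂ] X :=
  A.domain.subtype + lam • A.toFun

lemma oneAddSMul_apply (A : X →ₗ.[ℂ] X) (lam : ℂ) (u : A.domain) :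
    oneAddSMul A lam u = u + lam • A u :=
  rfl

lemma norm_smul_apply_le_of_norm_le {A : X →ₗ.[ℂ] X} {lam : ℂ} {C : ℝ} {v : A.domain}
    (hv : ‖(v : X)‖ ≤ C * ‖oneAddSMul A lam v‖) :
    ‖lam • A v‖ ≤ (1 + C) * ‖oneAddSMul A lam v‖ :=
  calc ‖lam • A v‖ = ‖oneAddSMul A lam v - v‖ := by rw [oneAddSMul_apply, add_sub_cancel_left]
    _ ≤ ‖oneAddSMul A lam v‖ + ‖(v : X)‖ := norm_sub_le _ _
    _ ≤ (1 + C) * ‖oneAddSMul A lam v‖ := by linarith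

lemma BoundedBelowOn.mono {B : X →L[ℂ] X} {S T : Set X} (hT : BoundedBelowOn B T) (hST : S ⊆ T) :
    BoundedBelowOn B S :=
  let ⟨c, hc, hB⟩ := hT
  ⟨c, hc, fun u hu => hB u (hST hu)⟩

section Intertwining

variable {B : X →L[ℂ] X} {D : X →ₗ.[ℂ] X} {lam : ℂ}

lemma mem_domain_opBD_iff {v : X} : v ∈ (opBD B D).domain ↔ v ∈ D.domain :=
  Iff.rfl

lemma mem_domain_opDB_iff {u : X} : u ∈ (opDB B D).domain ↔ B u ∈ D.domain :=
  Iff.rfl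

lemma opBD_apply (v : (opBD B D).domain) :
    opBD B D v = B (D ⟨v, mem_domain_opBD_iff.1 v.2⟩) :=
  rfl

lemma opDB_apply (u : (opDB B D).domain) :
    opDB B D u = D ⟨B u, mem_domain_opDB_iff.1 u.2⟩ :=
  rfl

lemma mem_graph_opDB_iff {p : X × X} : p ∈ (opDB B D).graph ↔ (B p.1, p.2) ∈ D.graph := by
  simp only [LinearPMap.mem_graph_iff]
  constructor
  · rintro ⟨u, hu, hDu⟩
    exact ⟨⟨B u, mem_domain_opDB_iff.1 u.2⟩, congrArg B hu, hDu⟩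
  · rintro ⟨⟨v, hv⟩, rfl, hDv⟩
    exact ⟨⟨p.1, mem_domain_opDB_iff.2 hv⟩, rfl, hDv⟩

lemma isClosed_opDB (hD : D.IsClosed) : (opDB B D).IsClosed := by
  have graph_eq : ((opDB B D).graph : Set (X × X)) = (fun p => (B p.1, p.2)) ⁻¹' D.graph :=
    Set.ext fun _ => mem_graph_opDB_iff
  rw [LinearPMap.IsClosed, graph_eq]
  exact IsClosed.preimage (by fun_prop) hD

lemma map_oneAddSMul_opDB (u : (opDB B D).domain) :
    B (oneAddSMul (opDB B D) lam u) =
      oneAddSMul (opBD B D) lam ⟨B u, mem_domain_opBD_iff.2 (mem_domain_opDB_iff.1 u.2)⟩ := by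
  rw [oneAddSMul_apply, oneAddSMul_apply, map_add, map_smul, opDB_apply, opBD_apply]

lemma injective_oneAddSMul_opDB (hinj : Function.Injective (oneAddSMul (opBD B D) lam)) :
    Function.Injective (oneAddSMul (opDB B D) lam) := by
  refine (injective_iff_map_eq_zero _).2 fun u hu => ?_
  have hBu : B u = 0 := congrArg Subtype.val <|
    (injective_iff_map_eq_zero _).1 hinj _ (by rw [← map_oneAddSMul_opDB, hu, map_zero])
  have hDBu : opDB B D u = 0 := by
    rw [opDB_apply, ← LinearPMap.map_zero D]
    exact congrArg D (Subtype.ext hBu)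
  rw [oneAddSMul_apply, hDBu, smul_zero, add_zero] at hu
  exact Subtype.ext hu

lemma surjective_oneAddSMul_opDB (hsurj : Function.Surjective (oneAddSMul (opBD B D) lam)) :
    Function.Surjective (oneAddSMul (opDB B D) lam) := by
  intro f
  obtain ⟨⟨v, hv⟩, hvf⟩ := hsurj (B f)
  rw [mem_domain_opBD_iff] at hv
  rw [oneAddSMul_apply, opBD_apply] at hvf
  have hB : B (f - lam • D ⟨v, hv⟩) = v := by
    rw [map_sub, map_smul, ← hvf, add_sub_cancel_right]
  have hmem : f - lam • D ⟨v, hv⟩ ∈ (opDB B D).domain := by rwa [mem_domain_opDB_iff, hB]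
  have hDB : opDB B D ⟨f - lam • D ⟨v, hv⟩, hmem⟩ = D ⟨v, hv⟩ := congrArg D (Subtype.ext hB)
  exact ⟨⟨_, hmem⟩, by rw [oneAddSMul_apply, hDB, sub_add_cancel]⟩

lemma bijective_oneAddSMul_opDB (hbij : Function.Bijective (oneAddSMul (opBD B D) lam)) :
    Function.Bijective (oneAddSMul (opDB B D) lam) :=
  ⟨injective_oneAddSMul_opDB hbij.1, surjective_oneAddSMul_opDB hbij.2⟩

lemma norm_le_mul_norm_oneAddSMul_opDB {c C : ℝ} (hc : 0 < c) (hC : 0 ≤ C)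
    (hB : ∀ w ∈ pran D, c * ‖w‖ ≤ ‖B w‖)
    (hBD : ∀ v : (opBD B D).domain, ‖(v : X)‖ ≤ C * ‖oneAddSMul (opBD B D) lam v‖)
    (u : (opDB B D).domain) :
    ‖(u : X)‖ ≤ (1 + (1 + C) * ‖B‖ / c) * ‖oneAddSMul (opDB B D) lam u‖ := by
  set f := oneAddSMul (opDB B D) lam u with hf
  have range_bound : ‖lam • opDB B D u‖ ≤ (1 + C) * ‖B‖ / c * ‖f‖ := by
    rw [div_mul_eq_mul_div, le_div_iff₀' hc]
    calc c * ‖lam • opDB B D u‖ ≤ ‖B (lam • opDB B D u)‖ :=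
          hB _ (Submodule.smul_mem _ _ ⟨_, rfl⟩)
      _ = ‖lam • opBD B D ⟨B u, mem_domain_opBD_iff.2 (mem_domain_opDB_iff.1 u.2)⟩‖ := by
          rw [map_smul, opDB_apply, opBD_apply]
      _ ≤ (1 + C) * ‖B f‖ := by
          rw [hf, map_oneAddSMul_opDB]
          exact norm_smul_apply_le_of_norm_le (hBD _)
      _ ≤ (1 + C) * ‖B‖ * ‖f‖ := by
          rw [mul_assoc]
          gcongr
          exact B.le_opNorm f
  calc ‖(u : X)‖ = ‖f - lam • opDB B D u‖ := by rw [hf, oneAddSMul_apply, add_sub_cancel_right]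
    _ ≤ ‖f‖ + ‖lam • opDB B D u‖ := norm_sub_le _ _
    _ ≤ (1 + (1 + C) * ‖B‖ / c) * ‖f‖ := by linarith

end Intertwining

theorem stmt_14_general {D : X →ₗ.[ℂ] X} (hD : D.IsClosed) {B : X →L[ℂ] X}
    (hlow : BoundedBelowOn B (pran D : Set X)) {ω : ℝ} (hBD : IsBisectorial (opBD B D) ω) :
    IsBisectorial (opDB B D) ω := by
  obtain ⟨c, hc, hB⟩ := hlow
  refine ⟨isClosed_opDB hD, fun ω' hω' => ?_⟩
  obtain ⟨C, hC, hres⟩ := hBD.2 ω' hω'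
  refine ⟨1 + (1 + C) * ‖B‖ / c, by positivity, fun lam hlam => ?_⟩
  obtain ⟨hbij, hbound⟩ := hres lam hlam
  exact ⟨bijective_oneAddSMul_opDB hbij, norm_le_mul_norm_oneAddSMul_opDB hc hC.le hB hbound⟩

/-- If `B` is bounded below on the closure of `R(D)`, `D` kernel/range
decomposes and `BD` is bisectorial of angle `ω`, then `DB` is bisectorial of angle `ω`. -/
theorem stmt_14 {X : Type*} [NormedAddCommGroup X] [NormedSpace ℂ X] [CompleteSpace X]
    (hrefl : ReflexiveSpace X) (D : X →ₗ.[ℂ] X) (hD : D.IsClosed)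
    (hdense : Dense (D.domain : Set X)) (B : X →L[ℂ] X)
    (hlow : BoundedBelowOn B ((pran D).topologicalClosure : Set X))
    (hD' : KerRanDecomp D) (ω : ℝ) (hω : ω ∈ Set.Ico 0 (Real.pi / 2))
    (hBD : IsBisectorial (opBD B D) ω) :
    IsBisectorial (opDB B D) ω :=
  stmt_14_general hD (hlow.mono (pran D).le_topologicalClosure) hBD
end
end

section
/- Let D be a closed, densely defined linear operator on a complex Banach space X and B a bounded linear operator on X such that ‖B(Du)‖ ≥ c‖Du‖ for all u ∈ D(D), for some c > 0. Let λ ∈ ℂ and suppose that I + λBD : D(D) → X is a bijection whose inverse is bounded with norm at most C. Then for all u ∈ D(D): δ·(‖u‖ + |λ|·‖Du‖) ≤ ‖(I + λBD)u‖ ≤ max(1, ‖B‖)·(‖u‖ + |λ|·‖Du‖), where δ = min((2C)⁻¹, c·(2C + 2)⁻¹). -/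
noncomputable section

variable {X : Type*} [NormedAddCommGroup X] [NormedSpace ℂ X]

section NormAdd

variable {E : Type*} [SeminormedAddCommGroup E] {x y : E} {b c C t : ℝ}

lemma norm_right_le_of_norm_left_le_mul_norm_add (hx : ‖x‖ ≤ C * ‖x + y‖) :
    ‖y‖ ≤ (C + 1) * ‖x + y‖ :=
  calc ‖y‖ = ‖(x + y) - x‖ := by rw [add_sub_cancel_left]
    _ ≤ ‖x + y‖ + ‖x‖ := norm_sub_le _ _
    _ ≤ ‖x + y‖ + C * ‖x + y‖ := by gcongr
    _ = (C + 1) * ‖x + y‖ := by ring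

-- Each entry of the minimum makes one of the two summands at most `‖x + y‖ / 2`.
lemma min_mul_add_le_norm_add (ht : 0 ≤ t) (hy : c * t ≤ ‖y‖)
    (hx : ‖x‖ ≤ C * ‖x + y‖) :
    min (2 * C)⁻¹ (c * (2 * C + 2)⁻¹) * (‖x‖ + t) ≤ ‖x + y‖ := by
  rcases le_or_gt C 0 with hC | hC
  · have hmin : min (2 * C)⁻¹ (c * (2 * C + 2)⁻¹) ≤ 0 :=
      (min_le_left _ _).trans (inv_nonpos.mpr (by linarith))
    exact (mul_nonpos_of_nonpos_of_nonneg hmin (by positivity)).trans (norm_nonneg _)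
  · have hx_half : (2 * C)⁻¹ * ‖x‖ ≤ ‖x + y‖ / 2 :=
      calc (2 * C)⁻¹ * ‖x‖ ≤ (2 * C)⁻¹ * (C * ‖x + y‖) := by gcongr
        _ = ‖x + y‖ / 2 := by field_simp
    have ht_half : c * (2 * C + 2)⁻¹ * t ≤ ‖x + y‖ / 2 :=
      calc c * (2 * C + 2)⁻¹ * t = (2 * C + 2)⁻¹ * (c * t) := by ring
        _ ≤ (2 * C + 2)⁻¹ * ‖y‖ := by gcongr
        _ ≤ (2 * C + 2)⁻¹ * ((C + 1) * ‖x + y‖) := by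
          gcongr
          exact norm_right_le_of_norm_left_le_mul_norm_add hx
        _ = ‖x + y‖ / 2 := by field_simp
    calc min (2 * C)⁻¹ (c * (2 * C + 2)⁻¹) * (‖x‖ + t)
        = min (2 * C)⁻¹ (c * (2 * C + 2)⁻¹) * ‖x‖
          + min (2 * C)⁻¹ (c * (2 * C + 2)⁻¹) * t := mul_add _ _ _
      _ ≤ (2 * C)⁻¹ * ‖x‖ + c * (2 * C + 2)⁻¹ * t := by
        gcongr
        exacts [min_le_left _ _, min_le_right _ _]
      _ ≤ ‖x + y‖ := by linarith

lemma norm_add_le_max_mul_add (ht : 0 ≤ t) (hy : ‖y‖ ≤ b * t) :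
    ‖x + y‖ ≤ max 1 b * (‖x‖ + t) :=
  calc ‖x + y‖ ≤ ‖x‖ + ‖y‖ := norm_add_le _ _
    _ ≤ 1 * ‖x‖ + b * t := by linarith
    _ ≤ max 1 b * ‖x‖ + max 1 b * t := by
      gcongr
      exacts [le_max_left _ _, le_max_right _ _]
    _ = max 1 b * (‖x‖ + t) := (mul_add _ _ _).symm

end NormAdd

-- The vectors `x` and `y` stand for `u` and `D u`.
theorem stmt_18_general {𝕜 E F : Type*} [NontriviallyNormedField 𝕜]
    [SeminormedAddCommGroup E] [NormedSpace 𝕜 E] [SeminormedAddCommGroup F] [NormedSpace 𝕜 F]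
    (B : F →L[𝕜] E) (lam : 𝕜) {c C : ℝ} {x : E} {y : F}
    (hlow : c * ‖y‖ ≤ ‖B y‖) (hinv : ‖x‖ ≤ C * ‖x + lam • B y‖) :
    min (2 * C)⁻¹ (c * (2 * C + 2)⁻¹) * (‖x‖ + ‖lam‖ * ‖y‖) ≤ ‖x + lam • B y‖ ∧
      ‖x + lam • B y‖ ≤ max 1 ‖B‖ * (‖x‖ + ‖lam‖ * ‖y‖) := by
  have hnonneg : 0 ≤ ‖lam‖ * ‖y‖ := by positivity
  have hlower : c * (‖lam‖ * ‖y‖) ≤ ‖lam • B y‖ := by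
    rw [norm_smul, mul_left_comm]
    gcongr
  have hupper : ‖lam • B y‖ ≤ ‖B‖ * (‖lam‖ * ‖y‖) := by
    rw [norm_smul, mul_left_comm]
    gcongr
    exact B.le_opNorm y
  exact ⟨min_mul_add_le_norm_add hnonneg hlower hinv,
    norm_add_le_max_mul_add hnonneg hupper⟩

/-- Let `D` be closed and densely defined on a complex Banach space `X` and
`B` bounded with `‖B (D u)‖ ≥ c ‖D u‖` for all `u ∈ D(D)`, for some `c > 0`. If
`I + λ BD : D(D) → X` is a bijection whose inverse is bounded with norm at most `C`, then for
all `u ∈ D(D)`,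
`δ (‖u‖ + |λ| ‖D u‖) ≤ ‖(I + λ BD) u‖ ≤ max 1 ‖B‖ (‖u‖ + |λ| ‖D u‖)`,
where `δ = min (2C)⁻¹ (c (2C + 2)⁻¹)`. -/
theorem stmt_18 {X : Type*} [NormedAddCommGroup X] [NormedSpace ℂ X] [CompleteSpace X]
    (D : X →ₗ.[ℂ] X) (hD : D.IsClosed) (hdense : Dense (D.domain : Set X)) (B : X →L[ℂ] X)
    (c : ℝ) (hc : 0 < c) (hlow : ∀ u : D.domain, c * ‖D u‖ ≤ ‖B (D u)‖)
    (lam : ℂ) (C : ℝ)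
    (hbij : Function.Bijective (fun u : D.domain => (u : X) + lam • B (D u)))
    (hinv : ∀ u : D.domain, ‖(u : X)‖ ≤ C * ‖(u : X) + lam • B (D u)‖) :
    ∀ u : D.domain,
      min (2 * C)⁻¹ (c * (2 * C + 2)⁻¹) * (‖(u : X)‖ + ‖lam‖ * ‖D u‖)
          ≤ ‖(u : X) + lam • B (D u)‖ ∧
      ‖(u : X) + lam • B (D u)‖ ≤ max 1 ‖B‖ * (‖(u : X)‖ + ‖lam‖ * ‖D u‖) :=
  fun u => stmt_18_general B lam (hlow u) (hinv u)
end
end
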